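/- arXiv:1807.08441 — 3 statements merged into one kernel-verified Lean document; each statement's English description precedes it below -/
import Mathlib

section
/- Let p be a prime, c a positive integer with p-adic valuation β, and n a positive integer divisible by p^β with p odd. Let U be a multisubset of the cyclic group C_n = ⟨x⟩ in which every element occurs at most twice. If χ(Ū) ≡ 0 (mod c) for all nonprincipal characters χ of C_n, then there exists a multisubset E of {0,1,...,n/p^β − 1} with all multiplicities at most 2 such that U = x^E·⟨x^{n/p^β}⟩ (a multiset union of cosets of the subgroup of order p^β). -/
/-!
A nonprincipal character of `C_n` sends the generator to some `ω ≠ 1` with `ω ^ n = 1`, and `U` to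
`F(ω)`, where `F` is the polynomial whose coefficients are the multiplicities of `U`. Let
`n = p * r = p ^ (s + 1) * m` with `p ∤ m`. If `p` divides all the `F(ω)`, then modulo `p` every
cyclotomic polynomial `Φ_N` with `1 < N ∣ n` divides `F`. In characteristic `p` the polynomial
`Φ_{p ^ (s + 1) * d}`, for `d ∣ m`, is the power of `Φ_d` with exponent `p ^ (s + 1) - p ^ s`, and
the `Φ_d` are pairwise coprime; hence modulo `p` the quotient
`(X ^ n - 1) / (X ^ r - 1) = (X ^ m - 1) ^ (p ^ (s + 1) - p ^ s)` divides `F`. In the group ring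
this says that translation by `r` fixes the multiplicities modulo `p`, hence exactly, as they are
less than `p`. For `ω ^ r = 1` the value `F(ω)` is then `p` times the sum over one period, so one
factor `p` can be cancelled for an induction on `β`.
-/

open Polynomial Finset Function

section CyclotomicInteger

variable {K : Type*} [Field K] [CharZero K] {N : ℕ} [NeZero N] {ω : K}

theorem mem_adjoin_int_of_isIntegral (hω : IsPrimitiveRoot ω N) {y : K} (hy : IsIntegral ℤ y)
    (hmem : y ∈ IntermediateField.adjoin ℚ {ω}) : y ∈ Algebra.adjoin ℤ {ω} := by
  let L := IntermediateField.adjoin ℚ {ω}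
  have : IsCyclotomicExtension {N} ℚ L := by
    change IsCyclotomicExtension {N} ℚ (IntermediateField.adjoin ℚ {ω}).toSubalgebra
    rw [IntermediateField.adjoin_simple_toSubalgebra_of_isAlgebraic
      (hω.isIntegral (NeZero.pos N)).tower_top.isAlgebraic]
    exact hω.adjoin_isCyclotomicExtension ℚ
  let w : L := ⟨ω, IntermediateField.mem_adjoin_simple_self ℚ ω⟩
  have hw : IsPrimitiveRoot w N := .of_map_of_injective (f := algebraMap L K) hω
    (algebraMap L K).injective
  have hint : IsIntegral ℤ (⟨y, hmem⟩ : L) :=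
    (isIntegral_algebraMap_iff (algebraMap L K).injective).1 hy
  obtain ⟨⟨u, hu⟩, huy⟩ :=
    (IsCyclotomicExtension.Rat.isIntegralClosure_adjoin_singleton hw).isIntegral_iff.1 hint
  have hmap : (Algebra.adjoin ℤ {w}).map (IsScalarTower.toAlgHom ℤ L K) = Algebra.adjoin ℤ {ω} :=
    AlgHom.map_adjoin_singleton _ _
  rw [← hmap]
  exact ⟨u, hu, congrArg (algebraMap L K) huy⟩

theorem cyclotomic_dvd_map_of_aeval_eq_mul {q : ℕ} (hq : q ≠ 0) (hω : IsPrimitiveRoot ω N)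
    (Q : ℤ[X]) {y : K} (hy : IsIntegral ℤ y) (h : aeval ω Q = q * y) :
    cyclotomic N (ZMod q) ∣ Q.map (Int.castRingHom (ZMod q)) := by
  have hmem : y ∈ IntermediateField.adjoin ℚ {ω} := by
    have hQ : aeval ω Q ∈ IntermediateField.adjoin ℚ {ω} := by
      rw [← aeval_map_algebraMap ℚ]
      exact IntermediateField.algebra_adjoin_le_adjoin ℚ _ (aeval_mem_adjoin_singleton ℚ ω)
    rw [eq_div_of_mul_eq (Nat.cast_ne_zero.2 hq) ((mul_comm _ _).trans h.symm)]
    exact div_mem hQ (natCast_mem _ q)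
  have hY := mem_adjoin_int_of_isIntegral hω hy hmem
  rw [Algebra.adjoin_singleton_eq_range_aeval] at hY
  obtain ⟨Y, rfl⟩ := hY
  have hdvd : cyclotomic N ℤ ∣ Q - (q : ℤ[X]) * Y := by
    rw [cyclotomic_eq_minpoly hω (NeZero.pos N)]
    exact minpoly.isIntegrallyClosed_dvd (hω.isIntegral (NeZero.pos N)) (by simp [h])
  simpa using map_dvd (Int.castRingHom (ZMod q)) hdvd

end CyclotomicInteger

section CharP

variable {F : Type*} [Field F]

theorem isCoprime_cyclotomic_of_dvd {m d e : ℕ} (hm : (m : F) ≠ 0) (hd : d ∣ m) (he : e ∣ m)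
    (hde : d ≠ e) : IsCoprime (cyclotomic d F) (cyclotomic e F) := by
  have hm0 : m ≠ 0 := by rintro rfl; simp at hm
  refine ((X_pow_sub_one_separable_iff.2 hm).of_dvd ?_).isCoprime
  rw [← prod_cyclotomic_eq_X_pow_sub_one (Nat.pos_of_ne_zero hm0),
    ← prod_pair (f := fun i => cyclotomic i F) hde]
  exact Finset.prod_dvd_prod_of_subset _ _ _ (by simp [insert_subset_iff, hd, he, hm0])

variable {p : ℕ} [Fact p.Prime] [CharP F p]

theorem X_pow_sub_one_pow_dvd_of_cyclotomic_dvd {m s : ℕ} (hm : ¬p ∣ m) {P : F[X]}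
    (hP : ∀ d, d ∣ m → cyclotomic (p ^ (s + 1) * d) F ∣ P) :
    (X ^ m - 1) ^ (p ^ (s + 1) - p ^ s) ∣ P := by
  have hm0 : 0 < m := Nat.pos_of_ne_zero (by rintro rfl; simp at hm)
  have hm_ne : (m : F) ≠ 0 := by rwa [Ne, CharP.cast_eq_zero_iff F p]
  rw [← prod_cyclotomic_eq_X_pow_sub_one hm0, ← prod_pow]
  refine Finset.prod_dvd_of_coprime (fun d hd e he hde => (isCoprime_cyclotomic_of_dvd hm_ne
    (Nat.dvd_of_mem_divisors hd) (Nat.dvd_of_mem_divisors he) hde).pow) fun d hd => ?_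
  have hdm := Nat.dvd_of_mem_divisors hd
  have hpow := cyclotomic_mul_prime_pow_eq F (fun hpd => hm (hpd.trans hdm)) s.succ_pos
  exact hpow ▸ hP d hdm

theorem X_pow_sub_one_dvd_mul_of_cyclotomic_dvd {r : ℕ} (hr : 0 < r) {P : F[X]}
    (hP : ∀ N, N ∣ p * r → 1 < N → cyclotomic N F ∣ P) :
    X ^ (p * r) - 1 ∣ P * (X ^ r - 1) := by
  have hp : p.Prime := Fact.out
  obtain ⟨s, m, hm, rfl⟩ := Nat.exists_eq_pow_mul_and_not_dvd hr.ne' p hp.ne_one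
  have hm0 : 0 < m := Nat.pos_of_mul_pos_left hr
  have hfrob (j : ℕ) : (X ^ (p ^ j * m) - 1 : F[X]) = (X ^ m - 1) ^ p ^ j := by
    rw [sub_pow_char_pow, one_pow, ← pow_mul, mul_comm m]
  have hdvd : (X ^ m - 1) ^ (p ^ (s + 1) - p ^ s) ∣ P :=
    X_pow_sub_one_pow_dvd_of_cyclotomic_dvd hm fun d hd => by
      refine hP _ (by rw [← mul_assoc, ← pow_succ']; exact mul_dvd_mul_left _ hd) ?_
      exact (Nat.one_lt_pow s.succ_ne_zero hp.one_lt).trans_le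
        (Nat.le_mul_of_pos_right _ (Nat.pos_of_dvd_of_pos hd hm0))
  rw [← mul_assoc, ← pow_succ', hfrob, hfrob,
    ← Nat.sub_add_cancel (Nat.pow_le_pow_right hp.pos s.le_succ), pow_add]
  exact mul_dvd_mul_right hdvd _

end CharP

/-- The element `∑ i < n, f i * x ^ i` of the group ring `R[C_n]`, represented by a polynomial
modulo `X ^ n - 1`. The coefficient function `f` is meant to be `n`-periodic. -/
noncomputable def groupRingPoly {R : Type*} [Semiring R] (n : ℕ) (f : ℕ → R) : R[X] :=
  ∑ i ∈ range n, C (f i) * X ^ i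

theorem map_groupRingPoly {R S : Type*} [Semiring R] [Semiring S] (φ : R →+* S) (n : ℕ)
    (f : ℕ → R) : (groupRingPoly n f).map φ = groupRingPoly n fun i => φ (f i) := by
  simp [groupRingPoly, Polynomial.map_sum]

theorem aeval_groupRingPoly {R A : Type*} [CommSemiring R] [Semiring A] [Algebra R A] (n : ℕ)
    (f : ℕ → R) (a : A) :
    aeval a (groupRingPoly n f) = ∑ i ∈ range n, algebraMap R A (f i) * a ^ i := by
  simp [groupRingPoly]

theorem sum_range_eq_sum_zmod_val {M : Type*} [AddCommMonoid M] (n : ℕ) [NeZero n] (g : ℕ → M) :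
    ∑ i ∈ range n, g i = ∑ a : ZMod n, g a.val :=
  sum_bij' (fun i _ => (i : ZMod n)) (fun a _ => a.val) (by simp) (by simp [ZMod.val_lt])
    (fun _ hi => ZMod.val_cast_of_lt (mem_range.1 hi)) (by simp)
    (fun _ hi => by rw [ZMod.val_cast_of_lt (mem_range.1 hi)])

theorem periodic_of_X_pow_sub_one_dvd {R : Type*} [CommRing R] {n k : ℕ} [NeZero n] {f : ℕ → R}
    (hf : Periodic f n) (h : X ^ n - 1 ∣ groupRingPoly n f * (X ^ k - 1)) : Periodic f k := by
  let x : AddMonoidAlgebra R (ZMod n) := .single 1 1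
  have hx (j : ℕ) : x ^ j = .single (j : ZMod n) 1 := by
    simp [x, AddMonoidAlgebra.single_pow]
  have hxn : x ^ n = 1 := by simp [hx, AddMonoidAlgebra.one_def]
  have hcoeff (i : ℕ) : (aeval x (groupRingPoly n f)).coeff (i : ZMod n) = f i := by
    simp only [aeval_groupRingPoly, hx, Algebra.algebraMap_eq_smul_one, smul_one_mul,
      AddMonoidAlgebra.smul_single, smul_eq_mul, mul_one, AddMonoidAlgebra.coeff_sum,
      AddMonoidAlgebra.coeff_single, Finsupp.finsetSum_apply, Finsupp.single_apply]
    rw [sum_range_eq_sum_zmod_val]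
    simp [ZMod.val_natCast, hf.map_mod_nat]
  have hzero : aeval x (groupRingPoly n f) * x ^ k = aeval x (groupRingPoly n f) := by
    have := map_dvd (aeval x) h
    simpa [hxn, mul_sub, sub_eq_zero] using this
  intro i
  rw [← hcoeff, ← hzero, hx]
  simp [hcoeff]

/-- Every nonprincipal character of the cyclic group of order `n` takes the element
`∑ i < n, f i * x ^ i` to a multiple of `c` in the algebraic integers of `K`. A character is given
by the image `ω` of the generator, so `K` should contain a primitive `n`-th root of unity. -/
def NonprincipalSumsDvd (K : Type*) [Field K] (c n : ℕ) (f : ℕ → ℤ) : Prop :=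
  ∀ ω : K, ω ^ n = 1 → ω ≠ 1 → ∃ y, IsIntegral ℤ y ∧ aeval ω (groupRingPoly n f) = c * y

theorem aeval_groupRingPoly_mul_of_periodic {R A : Type*} [CommSemiring R] [Semiring A]
    [Algebra R A] {k : ℕ} {f : ℕ → R} (hf : Periodic f k) {a : A} (ha : a ^ k = 1) (m : ℕ) :
    aeval a (groupRingPoly (m * k) f) = m * aeval a (groupRingPoly k f) := by
  simp only [aeval_groupRingPoly]
  induction m with
  | zero => simp
  | succ m ih =>
    have hterm (i : ℕ) : algebraMap R A (f (m * k + i)) * a ^ (m * k + i) =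
        algebraMap R A (f i) * a ^ i := by
      rw [pow_add, mul_comm m, pow_mul, ha, one_pow, one_mul, add_comm, mul_comm k,
        ← smul_eq_mul m, hf.nsmul]
    rw [Nat.succ_mul, sum_range_add, ih]
    simp [hterm, add_mul]

namespace NonprincipalSumsDvd

variable {K : Type*} [Field K] {f : ℕ → ℤ}

theorem of_dvd {b c n : ℕ} (hbc : b ∣ c) (h : NonprincipalSumsDvd K c n f) :
    NonprincipalSumsDvd K b n f := by
  intro ω hω hω1
  obtain ⟨y, hy, hsum⟩ := h ω hω hω1
  obtain ⟨d, rfl⟩ := hbc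
  exact ⟨d * y, (isIntegral_natCast d).mul hy, by rw [hsum]; push_cast; ring⟩

variable [CharZero K]

theorem of_mul {m c k : ℕ} (hm : m ≠ 0) (hf : Periodic f k)
    (h : NonprincipalSumsDvd K (m * c) (m * k) f) : NonprincipalSumsDvd K c k f := by
  intro ω hω hω1
  obtain ⟨y, hy, hsum⟩ := h ω (by rw [mul_comm, pow_mul, hω, one_pow]) hω1
  refine ⟨y, hy, mul_left_cancel₀ (Nat.cast_ne_zero.2 hm : (m : K) ≠ 0) ?_⟩
  rw [← aeval_groupRingPoly_mul_of_periodic hf hω, hsum]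
  push_cast
  ring

variable {ζ : K} {p k : ℕ}

theorem periodic_intCast_zmod (hp : p.Prime) (hk : 0 < k) (hζ : IsPrimitiveRoot ζ (p * k))
    (hf : Periodic f (p * k)) (h : NonprincipalSumsDvd K p (p * k) f) :
    Periodic (fun i => (f i : ZMod p)) k := by
  have : Fact p.Prime := ⟨hp⟩
  have hn : 0 < p * k := Nat.mul_pos hp.pos hk
  have : NeZero (p * k) := ⟨hn.ne'⟩
  refine periodic_of_X_pow_sub_one_dvd (n := p * k) (fun i => by simp only [hf i])
    (X_pow_sub_one_dvd_mul_of_cyclotomic_dvd hk fun N hN hN1 => ?_)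
  have : NeZero N := ⟨by omega⟩
  obtain ⟨t, ht⟩ := hN
  have hω : IsPrimitiveRoot (ζ ^ t) N := hζ.pow hn (ht.trans (mul_comm N t))
  obtain ⟨y, hy, hsum⟩ := h _ ((hω.pow_eq_one_iff_dvd _).2 ⟨t, ht⟩) (hω.ne_one hN1)
  simpa only [map_groupRingPoly, eq_intCast] using
    cyclotomic_dvd_map_of_aeval_eq_mul hp.ne_zero hω _ hy hsum

theorem periodic (hp : p.Prime) (hk : 0 < k)
    (hinj : Set.InjOn (Int.cast : ℤ → ZMod p) (Set.range f)) {β : ℕ}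
    (hζ : IsPrimitiveRoot ζ (p ^ β * k)) (hf : Periodic f (p ^ β * k))
    (h : NonprincipalSumsDvd K (p ^ β) (p ^ β * k) f) : Periodic f k := by
  induction β generalizing ζ with
  | zero => simpa using hf
  | succ β ih =>
    have hk' : 0 < p ^ β * k := Nat.mul_pos (pow_pos hp.pos β) hk
    have hp_dvd := h.of_dvd (dvd_pow_self p β.succ_ne_zero)
    rw [pow_succ', mul_assoc] at hζ hf h hp_dvd
    have hf' : Periodic f (p ^ β * k) := fun i =>
      hinj ⟨_, rfl⟩ ⟨_, rfl⟩ (hp_dvd.periodic_intCast_zmod hp hk' hζ hf i)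
    exact ih (hζ.pow (Nat.mul_pos hp.pos hk') rfl) hf' (h.of_mul hp.ne_zero hf')

end NonprincipalSumsDvd

section Multiset

variable {n : ℕ}

theorem sum_map_val_eq_sum_range_count {A : Type*} [Semiring A] [NeZero n]
    (U : Multiset (ZMod n)) (g : ℕ → A) :
    (U.map fun a => g a.val).sum = ∑ i ∈ range n, (U.count (i : ZMod n) : A) * g i := by
  rw [sum_multiset_map_count, sum_subset (subset_univ _) (fun i _ hi => by simp_all),
    sum_range_eq_sum_zmod_val]
  simp

theorem nonprincipalSumsDvd_count {K : Type*} [Field K] {c : ℕ} {ζ : K} [NeZero n]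
    (hζ : IsPrimitiveRoot ζ n) {U : Multiset (ZMod n)}
    (h : ∀ z : ZMod n, z ≠ 0 → ∃ y ∈ Algebra.adjoin ℤ ({ζ} : Set K),
      (U.map (fun i => ζ ^ (i.val * z.val))).sum = (c : K) * y) :
    NonprincipalSumsDvd K c n fun i => U.count (i : ZMod n) := by
  intro ω hω hω1
  obtain ⟨z, hz, rfl⟩ := hζ.eq_pow_of_pow_eq_one hω
  have hval : (z : ZMod n).val = z := ZMod.val_cast_of_lt hz
  obtain ⟨y, hy, hsum⟩ := h z fun hz0 => hω1 <| by rw [← hval, hz0, ZMod.val_zero, pow_zero]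
  have hle : Algebra.adjoin ℤ {ζ} ≤ integralClosure ℤ K :=
    Algebra.adjoin_le (Set.singleton_subset_iff.2 (hζ.isIntegral (NeZero.pos n)))
  refine ⟨y, hle hy, ?_⟩
  rw [← hsum, hval, sum_map_val_eq_sum_range_count U fun i => ζ ^ (i * z), aeval_groupRingPoly]
  simp [← pow_mul, mul_comm z]

/-- The multiset of representatives in `{0, …, k - 1}` of those elements of `U` that have one. It
indexes the cosets of the subgroup generated by `k` when `U` is a union of such cosets. -/
def residuesBelow (k : ℕ) (U : Multiset (ZMod n)) : Multiset ℕ :=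
  (U.filter fun a => a.val < k).map ZMod.val

theorem lt_of_mem_residuesBelow {k a : ℕ} {U : Multiset (ZMod n)} (ha : a ∈ residuesBelow k U) :
    a < k := by
  obtain ⟨b, hb, rfl⟩ := Multiset.mem_map.1 ha
  exact (Multiset.mem_filter.1 hb).2

variable [NeZero n]

theorem count_val_residuesBelow {k : ℕ} (U : Multiset (ZMod n)) {b : ZMod n} (hb : b.val < k) :
    (residuesBelow k U).count b.val = U.count b := by
  rw [residuesBelow, Multiset.count_map_eq_count' _ _ (ZMod.val_injective n),
    Multiset.count_filter, if_pos hb]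

theorem count_residuesBelow_le {k m : ℕ} {U : Multiset (ZMod n)} (hU : ∀ b, U.count b ≤ m)
    (a : ℕ) : (residuesBelow k U).count a ≤ m := by
  by_cases ha : a ∈ residuesBelow k U
  · obtain ⟨b, hb, rfl⟩ := Multiset.mem_map.1 ha
    exact (count_val_residuesBelow U (Multiset.mem_filter.1 hb).2).trans_le (hU b)
  · simp [Multiset.count_eq_zero_of_notMem ha]

end Multiset

theorem count_map_range_add_mul {m k a : ℕ} [NeZero (m * k)] (ha : a < k) (b : ZMod (m * k)) :
    ((Multiset.range m).map fun j => ((a + j * k : ℕ) : ZMod (m * k))).count b =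
      if b.val % k = a then 1 else 0 := by
  have hval {j : ℕ} (hj : j ∈ Multiset.range m) :
      ((a + j * k : ℕ) : ZMod (m * k)).val = a + j * k :=
    ZMod.val_cast_of_lt (by have := Multiset.mem_range.1 hj; nlinarith)
  have hk : 0 < k := by omega
  have hnodup : ((Multiset.range m).map fun j => ((a + j * k : ℕ) : ZMod (m * k))).Nodup := by
    refine Multiset.Nodup.map_on (fun i hi j hj hij => ?_) (Multiset.nodup_range m)
    have := congrArg ZMod.val hij
    rw [hval hi, hval hj] at this
    exact Nat.eq_of_mul_eq_mul_right hk (Nat.add_left_cancel this)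
  rw [Multiset.count_eq_of_nodup hnodup]
  refine if_congr ⟨fun hb => ?_, fun hb => ?_⟩ rfl rfl
  · obtain ⟨j, hj, rfl⟩ := Multiset.mem_map.1 hb
    rw [hval hj, Nat.add_mul_mod_self_right, Nat.mod_eq_of_lt ha]
  · refine Multiset.mem_map.2 ⟨b.val / k, ?_, ?_⟩
    · rw [Multiset.mem_range, Nat.div_lt_iff_lt_mul hk]
      exact b.val_lt
    · rw [← hb, Nat.mod_add_div', ZMod.natCast_zmod_val]

theorem eq_bind_residuesBelow_of_periodic {m k : ℕ} [NeZero (m * k)] {U : Multiset (ZMod (m * k))}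
    (hU : Periodic (fun i : ℕ => U.count (i : ZMod (m * k))) k) :
    U = (residuesBelow k U).bind fun a =>
      (Multiset.range m).map fun j => ((a + j * k : ℕ) : ZMod (m * k)) := by
  have hn : 0 < m * k := NeZero.pos _
  have hk : 0 < k := Nat.pos_of_mul_pos_left hn
  ext b
  let r : ZMod (m * k) := (b.val % k : ℕ)
  have hr : r.val = b.val % k := ZMod.val_cast_of_lt ((Nat.mod_le _ _).trans_lt b.val_lt)
  calc U.count b = U.count r := by simpa using (hU.map_mod_nat b.val).symm
    _ = (residuesBelow k U).count (b.val % k) := by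
      rw [← hr, count_val_residuesBelow U (hr ▸ Nat.mod_lt _ hk)]
    _ = ((residuesBelow k U).map fun a => if b.val % k = a then 1 else 0).sum := by
      conv_lhs => rw [← Multiset.map_id (residuesBelow k U), ← Multiset.bind_singleton,
        Multiset.count_bind]
      simp [Multiset.count_singleton]
    _ = _ := by
      rw [Multiset.count_bind]
      refine congrArg _ (Multiset.map_congr rfl fun a ha => ?_)
      rw [count_map_range_add_mul (lt_of_mem_residuesBelow ha)]

theorem multiset_coset_structure_odd_prime_general {p β c n m : ℕ} (hp : p.Prime) (hm : m < p)
    (hc : p ^ β ∣ c) (hdvd : p ^ β ∣ n) (hn : 0 < n) {K : Type*} [Field K] [CharZero K] {ζ : K}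
    (hζ : IsPrimitiveRoot ζ n) {U : Multiset (ZMod n)} (hU : ∀ a, U.count a ≤ m)
    (hchar : ∀ z : ZMod n, z ≠ 0 → ∃ y ∈ Algebra.adjoin ℤ ({ζ} : Set K),
      (U.map (fun i => ζ ^ (i.val * z.val))).sum = (c : K) * y) :
    ∃ E : Multiset ℕ, (∀ a ∈ E, a < n / p ^ β) ∧ (∀ a : ℕ, E.count a ≤ m) ∧
      U = E.bind (fun a => (Multiset.range (p ^ β)).map
        (fun j => ((a + j * (n / p ^ β) : ℕ) : ZMod n))) := by
  obtain ⟨k, rfl⟩ := hdvd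
  have : NeZero (p ^ β * k) := ⟨hn.ne'⟩
  rw [Nat.mul_div_cancel_left k (pow_pos hp.pos β)]
  have hcount_inj : Set.InjOn (Int.cast : ℤ → ZMod p)
      (Set.range fun i : ℕ => (U.count (i : ZMod (p ^ β * k)) : ℤ)) := by
    rintro _ ⟨i, rfl⟩ _ ⟨j, rfl⟩ hij
    simp only [Int.cast_natCast, ZMod.natCast_eq_natCast_iff] at hij
    exact congrArg _ (hij.eq_of_lt_of_lt ((hU _).trans_lt hm) ((hU _).trans_lt hm))
  have hperiodic := ((nonprincipalSumsDvd_count hζ hchar).of_dvd hc).periodic hp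
    (Nat.pos_of_mul_pos_left hn) hcount_inj hζ fun i => by simp
  exact ⟨residuesBelow k U, fun _ => lt_of_mem_residuesBelow, count_residuesBelow_le hU,
    eq_bind_residuesBelow_of_periodic fun i => Nat.cast_injective (hperiodic i)⟩

/-- Let `p` be an odd prime, `c > 0` with `p`-adic valuation `β`, and
`p^β ∣ n`. If `U` is a multisubset of `C_n = ZMod n` (written additively) with all
multiplicities at most `2` and `χ(Ū) ≡ 0 (mod c)` (in `ℤ[ζ_n]`) for all nonprincipal
characters `χ`, then `U` is a multiset union of cosets of the subgroup of order `p^β`,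
indexed by a multiset `E ⊆ {0,…,n/p^β − 1}` with multiplicities at most `2`. -/
theorem multiset_coset_structure_odd_prime (p β c n : ℕ) (hp : p.Prime) (hp2 : p ≠ 2)
    (hc : 0 < c) (hβ : padicValNat p c = β) (hdvd : p ^ β ∣ n) (hn : 0 < n)
    (ζ : ℂ) (hζ : IsPrimitiveRoot ζ n)
    (U : Multiset (ZMod n)) (hU2 : ∀ a : ZMod n, U.count a ≤ 2)
    (hchar : ∀ z : ZMod n, z ≠ 0 →
      ∃ y ∈ Algebra.adjoin ℤ ({ζ} : Set ℂ),
        (U.map (fun i => ζ ^ (i.val * z.val))).sum = (c : ℂ) * y) :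
    ∃ E : Multiset ℕ, (∀ a ∈ E, a < n / p ^ β) ∧ (∀ a : ℕ, E.count a ≤ 2) ∧
      U = E.bind (fun a => (Multiset.range (p ^ β)).map
        (fun j => ((a + j * (n / p ^ β) : ℕ) : ZMod n))) :=
  multiset_coset_structure_odd_prime_general hp (lt_of_le_of_ne hp.two_le hp2.symm)
    (hβ ▸ pow_padicValNat_dvd) hdvd hn hζ hU2 hchar
end

section
/- Let c be an even positive integer with 2-adic valuation ν(c), and let n be divisible by 2^{ν(c)}. Let U be a multisubset of the cyclic group C_n = ⟨x⟩ in which every element occurs at most twice. If χ(Ū) ≡ 0 (mod c) for all nonprincipal characters χ of C_n, then there exists a multisubset E₀ of {0,1,...,2n/2^{ν(c)} − 1} such that U = x^{E₀}·⟨x^{2n/2^{ν(c)}}⟩. -/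
/-!
Let `f` be the multiplicity function of `U` and `n = p ^ s * m` with `p ∤ m` and `0 < s`. Summing
the characters that agree on the Sylow `p`-subgroup of `ℤ / n` shows that `m * ∑ f (m j) η ^ j`, for
`η` a primitive `p ^ s`-th root of unity, is a multiple of the power of `p` dividing `c`. Since the
powers of `η` below `φ (p ^ s)` form an integral basis of `ℚ(η)` and the sum of `η ^ j` over a
residue class modulo `p ^ (s - 1)` vanishes, comparing coefficients gives `f 0 ≡ f (n / p)`, and by
translation `f a ≡ f (a + n / p)`, modulo that power of `p`. As long as the modulus exceeds the
multiplicities, `f` therefore has period `n / p`, and the character sums over `ℤ / n` of characters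
trivial on the subgroup of order `p` are `p` times those over `ℤ / (n / p)`: each descent costs one
factor `p` of the modulus and makes `f` constant on the cosets of a subgroup `p` times larger.
-/

section PeriodicSums

open Finset Function

theorem sum_range_mul_eq_sum_sum {M : Type*} [AddCommMonoid M] (F : ℕ → M) (a b : ℕ) :
    ∑ i ∈ range (a * b), F i = ∑ j ∈ range b, ∑ i ∈ range a, F (i + j * a) := by
  induction b with
  | zero => simp
  | succ b ih =>
    rw [Nat.mul_succ, sum_range_add, ih, sum_range_succ]
    simp only [add_comm, mul_comm]

theorem sum_range_mul_ite_dvd {M : Type*} [AddCommMonoid M] (F : ℕ → M) (q : ℕ) {m : ℕ}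
    (hm : 0 < m) :
    ∑ i ∈ range (m * q), (if m ∣ i then F i else 0) = ∑ j ∈ range q, F (m * j) := by
  rw [sum_range_mul_eq_sum_sum]
  refine sum_congr rfl fun j _ => ?_
  rw [sum_eq_single_of_mem 0 (mem_range.2 hm)]
  · simp [mul_comm j m]
  · intro i hi hi0
    rw [if_neg]
    rw [Nat.dvd_add_left (Dvd.intro_left j rfl)]
    exact Nat.not_dvd_of_pos_of_lt (Nat.pos_of_ne_zero hi0) (mem_range.1 hi)

theorem sum_range_add_of_periodic {M : Type*} [AddCommMonoid M] {F : ℕ → M} {n : ℕ}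
    (hF : Periodic F n) (a : ℕ) : ∑ i ∈ range n, F (i + a) = ∑ i ∈ range n, F i := by
  have hmod : ∑ i ∈ Ico a (a + n), F (i % n) = ∑ i ∈ range n, F i := by
    have := congrArg (fun s => (s.map F).sum) (Nat.multiset_Ico_map_mod a n)
    rwa [Multiset.map_map] at this
  simpa only [sum_Ico_eq_sum_range, hF.map_mod_nat, add_tsub_cancel_left, fun i => add_comm i a]
    using hmod

theorem sum_range_mul_mul_pow_of_periodic {R : Type*} [CommSemiring R] {g : ℕ → R} {q : ℕ}
    (hg : Periodic g q) (ω : R) (b : ℕ) :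
    ∑ i ∈ range (q * b), g i * ω ^ i =
      (∑ t ∈ range b, (ω ^ q) ^ t) * ∑ i ∈ range q, g i * ω ^ i := by
  rw [sum_range_mul_eq_sum_sum, sum_mul]
  refine sum_congr rfl fun t _ => ?_
  rw [mul_sum]
  refine sum_congr rfl fun i _ => ?_
  rw [show g (i + t * q) = g i from hg.nat_mul t i]
  ring

end PeriodicSums

section PrimitiveRoots

open Finset

variable {R : Type*} [CommRing R] [IsDomain R]

theorem sum_range_pow_pow_of_isPrimitiveRoot {ω : R} {m : ℕ} (hω : IsPrimitiveRoot ω m) (i : ℕ) :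
    ∑ t ∈ range m, (ω ^ i) ^ t = if m ∣ i then (m : R) else 0 := by
  split_ifs with hi
  · simp [(hω.pow_eq_one_iff_dvd i).2 hi]
  · have hne : ω ^ i - 1 ≠ 0 := sub_ne_zero.2 (mt (hω.pow_eq_one_iff_dvd i).1 hi)
    refine (mul_eq_zero_iff_right hne).1 ?_
    rw [geom_sum_mul, ← pow_mul, mul_comm, pow_mul, hω.pow_eq_one, one_pow, sub_self]

/- The characters `i ↦ ζ ^ ((1 + q * t) * i)` are the extensions to `ℤ / q m ℤ` of the restriction
of `i ↦ ζ ^ i` to `m ℤ / q m ℤ`, so summing over them isolates that subgroup. -/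
theorem sum_sum_mul_pow_one_add_mul {ζ : R} {q m : ℕ} (hζ : IsPrimitiveRoot ζ (q * m))
    (hq : 0 < q) (hm : 0 < m) (f : ℕ → R) :
    ∑ t ∈ range m, ∑ i ∈ range (q * m), f i * (ζ ^ (1 + q * t)) ^ i =
      m * ∑ j ∈ range q, f (m * j) * (ζ ^ m) ^ j := by
  have hω : IsPrimitiveRoot (ζ ^ q) m := hζ.pow (Nat.mul_pos hq hm) rfl
  have hinner (i : ℕ) : ∑ t ∈ range m, f i * (ζ ^ (1 + q * t)) ^ i =
      if m ∣ i then m * (f i * ζ ^ i) else 0 := by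
    have hterm (t : ℕ) : f i * (ζ ^ (1 + q * t)) ^ i = f i * ζ ^ i * ((ζ ^ q) ^ i) ^ t := by ring
    simp_rw [hterm, ← mul_sum, sum_range_pow_pow_of_isPrimitiveRoot hω i]
    split_ifs <;> ring
  rw [sum_comm]
  simp_rw [hinner]
  rw [mul_comm q m, sum_range_mul_ite_dvd _ _ hm, mul_sum]
  simp_rw [pow_mul]

theorem sum_range_mul_pow_eq_sum_range_totient {p r : ℕ} (hp : p.Prime) {η : R}
    (hη : IsPrimitiveRoot η (p ^ (r + 1))) (a : ℕ → R) :
    ∑ j ∈ range (p ^ (r + 1)), a j * η ^ j =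
      ∑ j ∈ range (p ^ (r + 1)).totient,
        (a j - a ((p ^ (r + 1)).totient + j % p ^ r)) * η ^ j := by
  set N := (p ^ (r + 1)).totient with hN
  have hNdvd : p ^ r ∣ N := by rw [hN, Nat.totient_prime_pow_succ hp]; exact dvd_mul_right _ _
  have hsplit : p ^ (r + 1) = N + p ^ r := by
    rw [hN, Nat.totient_prime_pow_succ hp, pow_succ, ← Nat.mul_succ, Nat.succ_eq_add_one,
      Nat.sub_add_cancel hp.one_le]
  have hzero : ∑ j ∈ range (p ^ (r + 1)), a (N + j % p ^ r) * η ^ j = 0 := by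
    have hper : Function.Periodic (fun j => a (N + j % p ^ r)) (p ^ r) := fun j => by simp
    have hroot : IsPrimitiveRoot (η ^ p ^ r) p := hη.pow (pow_pos hp.pos _) (pow_succ p r)
    rw [pow_succ, sum_range_mul_mul_pow_of_periodic hper, hroot.geom_sum_eq_zero hp.one_lt,
      zero_mul]
  have htop : ∀ i ∈ range (p ^ r), (a (N + i) - a (N + (N + i) % p ^ r)) * η ^ (N + i) = 0 := by
    intro i hi
    rw [Nat.add_mod, Nat.mod_eq_zero_of_dvd hNdvd, zero_add, Nat.mod_mod,
      Nat.mod_eq_of_lt (mem_range.1 hi), sub_self, zero_mul]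
  rw [← sub_zero (∑ j ∈ range (p ^ (r + 1)), a j * η ^ j), ← hzero, ← sum_sub_distrib, hsplit,
    sum_range_add]
  simp_rw [← sub_mul]
  rw [sum_eq_zero htop, add_zero]

end PrimitiveRoots

section IntegralMultiples

open Finset Function

/-- The multiples of `c` in the ring of algebraic integers of `K`, as a submodule of `K` over that
ring: `x ∈ integralMultiples K c` is the congruence `x ≡ 0 (mod c)` of algebraic integers. -/
def integralMultiples (K : Type*) [CommRing K] (c : ℕ) : Submodule (integralClosure ℤ K) K :=
  Submodule.span _ {(c : K)}

variable {K : Type*}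

theorem mem_integralMultiples [CommRing K] {c : ℕ} {x : K} :
    x ∈ integralMultiples K c ↔ ∃ y, IsIntegral ℤ y ∧ x = c * y := by
  simp only [integralMultiples, Submodule.mem_span_singleton, Subtype.exists,
    mem_integralClosure_iff, Subalgebra.smul_def, smul_eq_mul, exists_prop, eq_comm, mul_comm]

theorem mul_mem_integralMultiples [CommRing K] {c : ℕ} {x y : K} (hy : IsIntegral ℤ y)
    (hx : x ∈ integralMultiples K c) : y * x ∈ integralMultiples K c :=
  (integralMultiples K c).smul_mem (⟨y, hy⟩ : integralClosure ℤ K) hx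

theorem integralMultiples_anti [CommRing K] {c d : ℕ} (h : c ∣ d) :
    integralMultiples K d ≤ integralMultiples K c := by
  obtain ⟨e, rfl⟩ := h
  intro x hx
  obtain ⟨y, hy, rfl⟩ := mem_integralMultiples.1 hx
  refine mem_integralMultiples.2 ⟨e * y, (isIntegral_natCast e).mul hy, ?_⟩
  push_cast
  ring

theorem mem_integralMultiples_of_mul_mem [CommRing K] [IsDomain K] {b c : ℕ} (hb : (b : K) ≠ 0)
    {x : K} (h : b * x ∈ integralMultiples K (b * c)) : x ∈ integralMultiples K c := by
  obtain ⟨y, hy, hxy⟩ := mem_integralMultiples.1 h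
  refine mem_integralMultiples.2 ⟨y, hy, mul_left_cancel₀ hb ?_⟩
  rw [hxy, Nat.cast_mul, mul_assoc]

theorem sum_range_add_mul_pow_mem [Field K] {n c : ℕ} (hn : 0 < n) {ω : K} (hω : ω ^ n = 1)
    {f : ℕ → K} (hf : Periodic f n) (h : ∑ i ∈ range n, f i * ω ^ i ∈ integralMultiples K c)
    (a : ℕ) : ∑ i ∈ range n, f (i + a) * ω ^ i ∈ integralMultiples K c := by
  have hω0 : ω ≠ 0 := by rintro rfl; simp [hn.ne'] at hω
  have hint : IsIntegral ℤ (ω⁻¹ ^ a) :=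
    (IsIntegral.of_pow hn (by rw [inv_pow, hω, inv_one]; exact isIntegral_one)).pow a
  have hper : Periodic (fun i => f i * ω ^ i) n := fun i => by
    simp only [hf i, pow_add, hω, mul_one]
  have hshift : ∑ i ∈ range n, f (i + a) * ω ^ i = ω⁻¹ ^ a * ∑ i ∈ range n, f i * ω ^ i := by
    rw [← sum_range_add_of_periodic hper a, mul_sum]
    refine sum_congr rfl fun i _ => ?_
    rw [pow_add, inv_pow]
    field_simp
  exact hshift ▸ mul_mem_integralMultiples hint h

end IntegralMultiples

section CyclotomicCongruences

open Finset Function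
open scoped NumberField

theorem dvd_coeff_of_sum_smul_basis_eq {ι R M : Type*} [Fintype ι] [CommRing R] [AddCommGroup M]
    [Module R M] (b : Module.Basis ι R M) {a : ι → R} {c : R} {y : M}
    (h : ∑ i, a i • b i = c • y) (i : ι) : c ∣ a i :=
  ⟨b.repr y i, by
    simpa [-map_sum, Module.Basis.repr_sum_self] using congrArg (fun x => b.repr x i) h⟩

theorem dvd_coeff_of_isCyclotomicExtension {L : Type*} [Field L] [CharZero L] {N : ℕ} [NeZero N]
    [IsCyclotomicExtension {N} ℚ L] {η : L} (hη : IsPrimitiveRoot η N) {c : ℕ} {a : ℕ → ℤ} {y : 𝓞 L}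
    (h : ∑ j ∈ range N.totient, (a j : L) * η ^ j = c * y) {j : ℕ} (hj : j < N.totient) :
    (c : ℤ) ∣ a j := by
  let B := hη.integralPowerBasis
  have hdim : B.dim = N.totient := hη.integralPowerBasis_dim
  have hsum : ∑ i : Fin B.dim, a i • B.basis i = (c : ℤ) • y := by
    apply NumberField.RingOfIntegers.coe_injective
    rw [← hdim, ← Fin.sum_univ_eq_sum_range (fun j => (a j : L) * η ^ j)] at h
    have hgen : algebraMap (𝓞 L) L hη.toInteger = η := rfl
    simpa [B, hη.integralPowerBasis_gen, hgen, map_mul] using h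
  exact dvd_coeff_of_sum_smul_basis_eq B.basis hsum ⟨j, hdim ▸ hj⟩

variable {K : Type*} [Field K] [CharZero K]

theorem dvd_coeff_of_sum_range_totient_mem {N : ℕ} [NeZero N] {η : K} (hη : IsPrimitiveRoot η N)
    {c : ℕ} (hc : c ≠ 0) {a : ℕ → ℤ}
    (h : ∑ j ∈ range N.totient, (a j : K) * η ^ j ∈ integralMultiples K c) {j : ℕ}
    (hj : j < N.totient) : (c : ℤ) ∣ a j := by
  obtain ⟨y, hy, hsum⟩ := mem_integralMultiples.1 h
  let L := IntermediateField.adjoin ℚ {η}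
  have : IsCyclotomicExtension {N} ℚ L := by
    change IsCyclotomicExtension {N} ℚ L.toSubalgebra
    rw [IntermediateField.adjoin_simple_toSubalgebra_of_isAlgebraic
      (hη.isIntegral (NeZero.pos N)).tower_top.isAlgebraic]
    exact hη.adjoin_isCyclotomicExtension ℚ
  have hηL : η ∈ L := IntermediateField.mem_adjoin_simple_self ℚ η
  have hyL : y ∈ L := by
    rw [← mul_div_cancel_left₀ y (Nat.cast_ne_zero.2 hc : (c : K) ≠ 0), ← hsum]
    exact div_mem (sum_mem fun i _ => mul_mem (intCast_mem L _) (pow_mem hηL i)) (natCast_mem L c)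
  have hyint : IsIntegral ℤ (⟨y, hyL⟩ : L) :=
    (isIntegral_algHom_iff (algebraMap L K).toIntAlgHom (algebraMap L K).injective).1 hy
  have hηprim : IsPrimitiveRoot (⟨η, hηL⟩ : L) N :=
    hη.of_map_of_injective (f := algebraMap L K) (algebraMap L K).injective
  exact dvd_coeff_of_isCyclotomicExtension (y := ⟨⟨y, hyL⟩, hyint⟩) hηprim
    (Subtype.ext (by simpa using! hsum)) hj

theorem coeff_modEq_of_sum_range_pow_mem {p r : ℕ} (hp : p.Prime) {η : K}
    (hη : IsPrimitiveRoot η (p ^ (r + 1))) {c : ℕ} (hc : c ≠ 0) {a : ℕ → ℤ}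
    (h : ∑ j ∈ range (p ^ (r + 1)), (a j : K) * η ^ j ∈ integralMultiples K c) {j : ℕ}
    (hj : j < (p ^ (r + 1)).totient) :
    a j ≡ a ((p ^ (r + 1)).totient + j % p ^ r) [ZMOD c] := by
  have : NeZero p := ⟨hp.ne_zero⟩
  rw [sum_range_mul_pow_eq_sum_range_totient hp hη] at h
  simp_rw [← Int.cast_sub] at h
  exact (Int.modEq_iff_dvd.2 (dvd_coeff_of_sum_range_totient_mem hη hc h hj)).symm

theorem coeff_zero_modEq_of_sum_range_pow_mem {p r : ℕ} (hp : p.Prime) {η : K}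
    (hη : IsPrimitiveRoot η (p ^ (r + 1))) {c : ℕ} (hc : c ≠ 0) {a : ℕ → ℤ}
    (h : ∑ j ∈ range (p ^ (r + 1)), (a j : K) * η ^ j ∈ integralMultiples K c) :
    a 0 ≡ a (p ^ r) [ZMOD c] := by
  have htot : (p ^ (r + 1)).totient = p ^ r * (p - 1) := Nat.totient_prime_pow_succ hp r
  have hle : p ^ r ≤ (p ^ (r + 1)).totient := by
    rw [htot]
    exact Nat.le_mul_of_pos_right _ (Nat.sub_pos_of_lt hp.one_lt)
  have hzero := coeff_modEq_of_sum_range_pow_mem hp hη hc h ((pow_pos hp.pos r).trans_le hle)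
  rw [Nat.zero_mod, add_zero] at hzero
  obtain hlt | heq := hle.lt_or_eq
  · have hpow := coeff_modEq_of_sum_range_pow_mem hp hη hc h hlt
    rw [Nat.mod_self, add_zero] at hpow
    exact hzero.trans hpow.symm
  · rwa [← heq] at hzero

theorem apply_zero_modEq_of_forall_charSum_mem {p r m e : ℕ} (hp : p.Prime) (hm : ¬ p ∣ m) {ζ : K}
    (hζ : IsPrimitiveRoot ζ (p ^ (r + 1) * m)) {f : ℕ → ℤ}
    (h : ∀ z, ¬ p ∣ z →
      ∑ i ∈ range (p ^ (r + 1) * m), (f i : K) * (ζ ^ z) ^ i ∈ integralMultiples K (p ^ e)) :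
    f 0 ≡ f (p ^ r * m) [ZMOD (p ^ e : ℕ)] := by
  have hq : 0 < p ^ (r + 1) := pow_pos hp.pos _
  have hm0 : 0 < m := Nat.pos_of_ne_zero fun h0 => hm (h0 ▸ dvd_zero p)
  have hndvd (t : ℕ) : ¬ p ∣ 1 + p ^ (r + 1) * t := by
    rw [Nat.dvd_add_left ((dvd_pow_self p r.succ_ne_zero).mul_right t)]
    exact hp.not_dvd_one
  have hsum : ∑ j ∈ range (p ^ (r + 1)), ((m * f (m * j) : ℤ) : K) * (ζ ^ m) ^ j ∈
      integralMultiples K (p ^ e) := by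
    have hmem := sum_mem fun t (_ : t ∈ range m) => h _ (hndvd t)
    rw [sum_sum_mul_pow_one_add_mul hζ hq hm0, mul_sum] at hmem
    simpa only [Int.cast_mul, Int.cast_natCast, mul_assoc] using hmem
  have hη : IsPrimitiveRoot (ζ ^ m) (p ^ (r + 1)) := hζ.pow (Nat.mul_pos hq hm0) (mul_comm _ _)
  have hmod := coeff_zero_modEq_of_sum_range_pow_mem hp hη (pow_ne_zero e hp.ne_zero) hsum
  have hcop : IsCoprime ((p ^ e : ℕ) : ℤ) m :=
    Nat.isCoprime_iff_coprime.2 (((hp.coprime_iff_not_dvd).2 hm).pow_left e)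
  rw [Int.modEq_iff_dvd, ← mul_sub] at hmod
  simpa only [mul_zero, mul_comm m (p ^ r)] using
    Int.modEq_iff_dvd.2 (hcop.dvd_of_dvd_mul_left hmod)

theorem apply_modEq_apply_add_of_forall_charSum_mem {p q e : ℕ} (hp : p.Prime) (hq : 0 < q) {ζ : K}
    (hζ : IsPrimitiveRoot ζ (q * p)) {f : ℕ → ℤ} (hf : Periodic f (q * p))
    (h : ∀ z, ¬ p ∣ z →
      ∑ i ∈ range (q * p), (f i : K) * (ζ ^ z) ^ i ∈ integralMultiples K (p ^ e)) (a : ℕ) :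
    f a ≡ f (a + q) [ZMOD (p ^ e : ℕ)] := by
  obtain ⟨r, m, hm, rfl⟩ := Nat.exists_eq_pow_mul_and_not_dvd hq.ne' p hp.ne_one
  have hn : p ^ r * m * p = p ^ (r + 1) * m := by ring
  have hmod := apply_zero_modEq_of_forall_charSum_mem (e := e) hp hm (hn ▸ hζ)
    (f := fun i => f (i + a)) fun z hz => hn ▸ sum_range_add_mul_pow_mem (Nat.mul_pos hq hp.pos)
      (by rw [pow_right_comm, hζ.pow_eq_one, one_pow]) (hf.comp _) (h z hz) a
  simpa only [zero_add, add_comm a] using hmod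

theorem periodic_of_forall_charSum_mem {p N : ℕ} (hp : p.Prime) (hN : 0 < N) (d k : ℕ) {ζ : K}
    (hζ : IsPrimitiveRoot ζ (N * p ^ k)) {f : ℕ → ℕ} (hf : Periodic f (N * p ^ k))
    (hlt : ∀ i, f i < p ^ (d + 1))
    (h : ∀ z, ¬ N * p ^ k ∣ z →
      ∑ i ∈ range (N * p ^ k), (f i : K) * (ζ ^ z) ^ i ∈ integralMultiples K (p ^ (d + k))) :
    Periodic f N := by
  induction k generalizing ζ with
  | zero => simpa using hf
  | succ k ih =>
    set q := N * p ^ k with hq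
    have hq0 : 0 < q := Nat.mul_pos hN (pow_pos hp.pos k)
    have hn : N * p ^ (k + 1) = q * p := by rw [hq]; ring
    rw [hn] at hζ hf h
    have hper : Periodic f q := fun a => by
      have hmod := apply_modEq_apply_add_of_forall_charSum_mem (e := d + (k + 1)) hp hq0 hζ
        (f := fun i => (f i : ℤ)) (hf.comp _)
        (fun z hz => by
          simpa using h z fun hdvd => hz ((dvd_mul_left p q).trans hdvd)) a
      have hmod' := (Int.natCast_modEq_iff.1 hmod).of_dvd (pow_dvd_pow p (by omega : d + 1 ≤ _))
      exact (hmod'.eq_of_lt_of_lt (hlt a) (hlt _)).symm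
    refine ih (hζ.pow (Nat.mul_pos hq0 hp.pos) (mul_comm q p)) hper fun z hz => ?_
    have hmem := h (p * z) fun hdvd =>
      hz (Nat.dvd_of_mul_dvd_mul_left hp.pos (mul_comm q p ▸ hdvd))
    have hroot : (ζ ^ (p * z)) ^ q = 1 := by
      rw [← pow_mul, show p * z * q = q * p * z by ring, pow_mul, hζ.pow_eq_one, one_pow]
    have hperK : Periodic (fun i => (f i : K)) q := hper.comp _
    rw [sum_range_mul_mul_pow_of_periodic hperK] at hmem
    simp only [hroot, one_pow, sum_const, card_range, nsmul_one] at hmem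
    rw [← add_assoc, pow_succ'] at hmem
    simpa only [pow_mul] using mem_integralMultiples_of_mul_mem (Nat.cast_ne_zero.2 hp.ne_zero) hmem

end CyclotomicCongruences

section Multisets

open Finset Function

theorem sum_map_zmod_eq_sum_range {M : Type*} [AddCommMonoid M] {n : ℕ} [NeZero n]
    (U : Multiset (ZMod n)) (F : ZMod n → M) :
    (U.map F).sum = ∑ i ∈ range n, U.count (i : ZMod n) • F i := by
  have hinj : Set.InjOn (fun i : ℕ => (i : ZMod n)) (range n) := fun i hi j hj hij => by
    simpa [ZMod.val_cast_of_lt (mem_range.1 hi), ZMod.val_cast_of_lt (mem_range.1 hj)]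
      using congrArg ZMod.val hij
  have huniv : (range n).image (fun i : ℕ => (i : ZMod n)) = univ :=
    eq_univ_of_forall fun a =>
      mem_image.2 ⟨a.val, mem_range.2 a.val_lt, ZMod.natCast_zmod_val a⟩
  rw [sum_multiset_map_count, sum_subset U.toFinset.subset_univ, ← huniv,
    sum_image hinj]
  intro a _ ha
  rw [Multiset.count_eq_zero_of_notMem (mt Multiset.mem_toFinset.2 ha), zero_nsmul]

theorem eq_bind_of_periodic_count {N M : ℕ} [NeZero (N * M)] {U : Multiset (ZMod (N * M))}
    (hU : Periodic (fun i : ℕ => U.count (i : ZMod (N * M))) N) :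
    U = ((Multiset.range N).bind fun a => Multiset.replicate (U.count (a : ZMod (N * M))) a).bind
      fun a => (Multiset.range M).map fun j => ((a + j * N : ℕ) : ZMod (N * M)) := by
  let coset (a : ℕ) : Multiset (ZMod (N * M)) :=
    (Multiset.range M).map fun j => ((a + j * N : ℕ) : ZMod (N * M))
  have hcoset (a : ℕ) :
      ∑ j ∈ range M, ({((a + j * N : ℕ) : ZMod (N * M))} : Multiset _) = coset a := by
    rw [← Multiset.sum_map_singleton (coset a), Multiset.map_map]
    rfl
  calc
    U = (U.map fun a => {a}).sum := (Multiset.sum_map_singleton U).symm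
    _ = ∑ a ∈ range N, ∑ j ∈ range M,
          U.count ((a + j * N : ℕ) : ZMod (N * M)) • {((a + j * N : ℕ) : ZMod (N * M))} := by
      rw [sum_map_zmod_eq_sum_range, sum_range_mul_eq_sum_sum, sum_comm]
    _ = ∑ a ∈ range N, U.count (a : ZMod (N * M)) • coset a := by
      refine sum_congr rfl fun a _ => ?_
      rw [← hcoset, smul_sum]
      exact sum_congr rfl fun j _ => congrArg (· • _) (hU.nat_mul j a)
    _ = (Multiset.range N).bind fun a =>
          (Multiset.replicate (U.count (a : ZMod (N * M))) a).bind coset := by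
      simp only [Multiset.bind, Multiset.join, Multiset.map_replicate, Multiset.sum_replicate]
      rfl
    _ = _ := (Multiset.bind_assoc ..).symm

end Multisets

theorem multiset_coset_structure_two_general {p d k c n : ℕ} (hp : p.Prime)
    (hc : p ^ (d + k) ∣ c) (hdvd : p ^ k ∣ n) (hn : 0 < n) {K : Type*} [Field K] [CharZero K]
    {ζ : K} (hζ : IsPrimitiveRoot ζ n)
    {U : Multiset (ZMod n)} (hU : ∀ a : ZMod n, U.count a < p ^ (d + 1))
    (hchar : ∀ z : ZMod n, z ≠ 0 → ∃ y, IsIntegral ℤ y ∧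
      (U.map fun i => ζ ^ (i.val * z.val)).sum = (c : K) * y) :
    ∃ E₀ : Multiset ℕ, (∀ a ∈ E₀, a < n / p ^ k) ∧
      U = E₀.bind fun a => (Multiset.range (p ^ k)).map
        fun j => ((a + j * (n / p ^ k) : ℕ) : ZMod n) := by
  obtain ⟨N, rfl⟩ := exists_eq_mul_left_of_dvd hdvd
  have : NeZero (N * p ^ k) := ⟨hn.ne'⟩
  have hper : Function.Periodic (fun i : ℕ => U.count (i : ZMod (N * p ^ k))) N := by
    refine periodic_of_forall_charSum_mem hp (Nat.pos_of_mul_pos_right hn) d k hζ (fun i => by simp)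
      (fun i => hU i) fun z hz => integralMultiples_anti hc ?_
    have hsum := mem_integralMultiples.2 (hchar z (mt (ZMod.natCast_eq_zero_iff z _).1 hz))
    rw [sum_map_zmod_eq_sum_range] at hsum
    convert hsum using 2 with i hi
    have hpow : ζ ^ (z % (N * p ^ k)) = ζ ^ z := by rw [hζ.eq_orderOf, pow_mod_orderOf]
    rw [ZMod.val_cast_of_lt (Finset.mem_range.1 hi), ZMod.val_natCast, mul_comm i, pow_mul, hpow,
      nsmul_eq_mul]
  rw [Nat.mul_div_cancel _ (pow_pos hp.pos k)]
  refine ⟨_, fun a ha => ?_, eq_bind_of_periodic_count hper⟩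
  obtain ⟨b, hb, hab⟩ := Multiset.mem_bind.1 ha
  rw [Multiset.eq_of_mem_replicate hab]
  exact Multiset.mem_range.1 hb

/-- Let `c` be even and positive with `2`-adic valuation `ν`, and `2^ν ∣ n`.
If `U` is a multisubset of `ZMod n` with multiplicities at most `2` and
`χ(Ū) ≡ 0 (mod c)` (in `ℤ[ζ_n]`) for all nonprincipal characters `χ`, then
`U = x^{E₀}·⟨x^{2n/2^ν}⟩` for some multisubset `E₀` of `{0,…,2n/2^ν − 1}`
(the subgroup `⟨x^{2n/2^ν}⟩` having order `2^{ν−1}`). -/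
theorem multiset_coset_structure_two (c ν n : ℕ) (hc : 0 < c) (hceven : 2 ∣ c)
    (hν : padicValNat 2 c = ν) (hdvd : 2 ^ ν ∣ n) (hn : 0 < n)
    (ζ : ℂ) (hζ : IsPrimitiveRoot ζ n)
    (U : Multiset (ZMod n)) (hU2 : ∀ a : ZMod n, U.count a ≤ 2)
    (hchar : ∀ z : ZMod n, z ≠ 0 →
      ∃ y ∈ Algebra.adjoin ℤ ({ζ} : Set ℂ),
        (U.map (fun i => ζ ^ (i.val * z.val))).sum = (c : ℂ) * y) :
    ∃ E₀ : Multiset ℕ, (∀ a ∈ E₀, a < 2 * n / 2 ^ ν) ∧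
      U = E₀.bind (fun a => (Multiset.range (2 ^ (ν - 1))).map
        (fun j => ((a + j * (2 * n / 2 ^ ν) : ℕ) : ZMod n))) := by
  obtain ⟨k, rfl⟩ : ∃ k, ν = 1 + k :=
    Nat.exists_eq_add_of_le (hν ▸ one_le_padicValNat_of_dvd hc.ne' hceven)
  rw [pow_add, pow_one, Nat.mul_div_mul_left _ _ two_pos, Nat.add_sub_cancel_left]
  exact multiset_coset_structure_two_general (d := 1) Nat.prime_two (hν ▸ pow_padicValNat_dvd)
    ((pow_dvd_pow 2 (Nat.le_add_left k 1)).trans hdvd) hn hζ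
    (fun a => (hU2 a).trans_lt (by norm_num))
    fun z hz => let ⟨y, hy, h⟩ := hchar z hz
      ⟨y, adjoin_le_integralClosure (hζ.isIntegral hn) hy, h⟩
end

section
/- Let c be an odd positive divisor of n and U a multisubset of the cyclic group C_n = ⟨x⟩ with every element occurring at most twice. If χ(Ū) ≡ 0 (mod c) for all nonprincipal characters χ of C_n, then there exists a multisubset E of {0,1,...,n/c − 1} with multiplicities at most 2 such that U = x^E·⟨x^{n/c}⟩. -/
/-!
Encode a multiset of exponents as the polynomial `P = ∑ X ^ a`, so that character values become
`P(ζ ^ z)` and the subgroup of order `c` becomes `T = (X ^ n - 1) / (X ^ (n / c) - 1)`; the goal is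
`T ∣ P` in `ℤ[X]`.

Let first `c = p` be prime and write `n = p ^ (k + 1) * m` with `p ∤ m`. Because `ℤ[ζ]` is
integrally closed, the congruences `P(ζ ^ z) ≡ 0 (mod p)` say that modulo `p` the polynomial `P` is
divisible by `Φ_{p ^ (k + 1) * d}` for all `d ∣ m`. Modulo `p` these are powers of the pairwise
coprime `Φ_d`, and their product is `T`, so `T ∣ P` modulo `p`. This divisibility says that the
coefficients of `P` are `n / p`-periodic modulo `p`, hence `n / p`-periodic, since they differ by
less than `p`.

For general `c`, peel off one prime `p` at a time: the polynomial `T` belonging to `p` takes the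
value `p` at every `ζ ^ (p * z)`, so `P / T` satisfies the hypotheses for `n / p`, `c / p` and
`ζ ^ p`.
-/

open Polynomial

section SubgroupPolynomial

/-- The polynomial `∑_{j < c} X ^ (j * s)`, representing in `R[X] / (X ^ (c * s) - 1)` the sum of
the elements of the subgroup of order `c` of the cyclic group of order `c * s`. -/
noncomputable def subgroupPolynomial (R : Type*) [Semiring R] (c s : ℕ) : R[X] :=
  ∑ j ∈ Finset.range c, X ^ (j * s)

variable {c s : ℕ}

section Semiring

variable {R : Type*} [Semiring R]

@[simp]
theorem subgroupPolynomial_one : subgroupPolynomial R 1 s = 1 := by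
  simp [subgroupPolynomial]

@[simp]
theorem map_subgroupPolynomial {S : Type*} [Semiring S] (f : R →+* S) :
    (subgroupPolynomial R c s).map f = subgroupPolynomial S c s := by
  simp [subgroupPolynomial, Polynomial.map_sum]

theorem coeff_mul_subgroupPolynomial {Q : R[X]} (hQ : Q.degree < s) {i : ℕ} (hi : i < c * s) :
    (Q * subgroupPolynomial R c s).coeff i = Q.coeff (i % s) := by
  have hs : 0 < s := Nat.pos_of_mul_pos_left (Nat.zero_lt_of_lt hi)
  simp only [subgroupPolynomial, Finset.mul_sum, finsetSum_coeff, coeff_mul_X_pow']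
  rw [Finset.sum_eq_single (i / s), if_pos (Nat.div_mul_le_self i s), Nat.mod_eq_sub_div_mul]
  · intro j _ hj
    refine ite_eq_right_iff.2 fun hji => coeff_eq_zero_of_degree_lt (hQ.trans_le ?_)
    have hlt : j + 1 ≤ i / s := lt_of_le_of_ne ((Nat.le_div_iff_mul_le hs).2 hji) hj
    have := (Nat.le_div_iff_mul_le hs).1 hlt
    exact_mod_cast Nat.le_sub_of_add_le (by linarith)
  · exact fun h => absurd (Finset.mem_range.2 (Nat.div_lt_of_lt_mul (by rwa [mul_comm]))) h

theorem coeff_mul_subgroupPolynomial_of_lt {Q : R[X]} (hc : c ≠ 0) (hQ : Q.degree < s) {i : ℕ}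
    (hi : i < s) : (Q * subgroupPolynomial R c s).coeff i = Q.coeff i := by
  rw [coeff_mul_subgroupPolynomial hQ (hi.trans_le (Nat.le_mul_of_pos_left s hc.bot_lt)),
    Nat.mod_eq_of_lt hi]

end Semiring

theorem aeval_subgroupPolynomial_of_pow_eq_one {R A : Type*} [CommSemiring R] [Semiring A]
    [Algebra R A] {x : A} (hx : x ^ s = 1) : aeval x (subgroupPolynomial R c s) = c := by
  simp [subgroupPolynomial, mul_comm _ s, pow_mul, hx]

section Ring

variable {R : Type*} [Ring R]

theorem subgroupPolynomial_mul_X_pow_sub_one :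
    subgroupPolynomial R c s * (X ^ s - 1) = X ^ (c * s) - 1 := by
  simp only [subgroupPolynomial, mul_comm _ s, pow_mul, geom_sum_mul]

theorem monic_X_pow_sub_one (hs : s ≠ 0) : (X ^ s - 1 : R[X]).Monic := by
  simpa using monic_X_pow_sub_C (1 : R) hs

theorem subgroupPolynomial_mul_subgroupPolynomial (b : ℕ) (hs : s ≠ 0) :
    subgroupPolynomial R b (c * s) * subgroupPolynomial R c s = subgroupPolynomial R (b * c) s := by
  apply (monic_X_pow_sub_one hs).isRegular.right
  simp only [mul_assoc, subgroupPolynomial_mul_X_pow_sub_one]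

theorem degree_mul_subgroupPolynomial_lt_iff [Nontrivial R] {Q : R[X]} (hcs : c * s ≠ 0) :
    (Q * subgroupPolynomial R c s).degree < (c * s : ℕ) ↔ Q.degree < s := by
  have hs : s ≠ 0 := right_ne_zero_of_mul hcs
  have hdeg : (Q * subgroupPolynomial R c s).degree + s = Q.degree + (c * s : ℕ) := by
    rw [← degree_X_pow_sub_C hs.bot_lt (1 : R), ← degree_X_pow_sub_C hcs.bot_lt (1 : R), C_1,
      ← (monic_X_pow_sub_one hs).degree_mul, ← (monic_X_pow_sub_one hcs).degree_mul, mul_assoc,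
      subgroupPolynomial_mul_X_pow_sub_one]
  rw [← WithBot.add_lt_add_iff_right (WithBot.natCast_ne_bot s), hdeg, add_comm (_ : WithBot ℕ) s,
    WithBot.add_lt_add_iff_right (WithBot.natCast_ne_bot _)]

end Ring

theorem subgroupPolynomial_dvd_iff {R : Type*} [CommRing R] {P : R[X]} (hcs : c * s ≠ 0)
    (hP : P.degree < (c * s : ℕ)) :
    subgroupPolynomial R c s ∣ P ↔ ∀ i < c * s, P.coeff i = P.coeff (i % s) := by
  nontriviality R
  have hs : 0 < s := (right_ne_zero_of_mul hcs).bot_lt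
  constructor
  · intro h i hi
    obtain ⟨Q, rfl⟩ := exists_eq_mul_left_of_dvd h
    rw [degree_mul_subgroupPolynomial_lt_iff hcs] at hP
    rw [coeff_mul_subgroupPolynomial hP hi,
      coeff_mul_subgroupPolynomial hP ((Nat.mod_le i s).trans_lt hi), Nat.mod_mod]
  · intro h
    let Q : R[X] := PowerSeries.trunc s P
    have hQ : Q.degree < s := PowerSeries.degree_trunc_lt _ s
    suffices P = Q * subgroupPolynomial R c s from this ▸ dvd_mul_left _ _
    ext i
    rcases lt_or_ge i (c * s) with hi | hi
    · rw [coeff_mul_subgroupPolynomial hQ hi, PowerSeries.coeff_trunc, if_pos (Nat.mod_lt i hs),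
        Polynomial.coeff_coe, h i hi]
    · have hQT := (degree_mul_subgroupPolynomial_lt_iff hcs).2 hQ
      rw [(degree_lt_iff_coeff_zero _ _).1 hP i hi, (degree_lt_iff_coeff_zero _ _).1 hQT i hi]

theorem subgroupPolynomial_dvd_of_dvd_map {p : ℕ} {P : ℤ[X]} (hcs : c * s ≠ 0)
    (hP : P.degree < (c * s : ℕ))
    (hcoeff : ∀ i < c * s, ∀ j < c * s, P.coeff i < P.coeff j + p)
    (h : subgroupPolynomial (ZMod p) c s ∣ P.map (Int.castRingHom (ZMod p))) :
    subgroupPolynomial ℤ c s ∣ P := by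
  rw [subgroupPolynomial_dvd_iff hcs (degree_map_le.trans_lt hP)] at h
  refine (subgroupPolynomial_dvd_iff hcs hP).2 fun i hi => ?_
  have hmod : i % s < c * s := (Nat.mod_le i s).trans_lt hi
  have hdvd : (p : ℤ) ∣ P.coeff (i % s) - P.coeff i := by
    simpa [ZMod.intCast_eq_intCast_iff_dvd_sub] using h i hi
  have hlt : |P.coeff (i % s) - P.coeff i| < p :=
    abs_sub_lt_iff.2 ⟨by linarith [hcoeff _ hmod _ hi], by linarith [hcoeff _ hi _ hmod]⟩
  linarith [Int.eq_zero_of_abs_lt_dvd hdvd hlt]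

end SubgroupPolynomial

section PrimeCharacteristic

theorem pairwise_isCoprime_cyclotomic {K : Type*} [Field K] {m : ℕ} (hm : (m : K) ≠ 0) :
    (m.divisors : Set ℕ).Pairwise (Function.onFun IsCoprime fun d => cyclotomic d K) := by
  intro a ha b hb hab
  have hsep : (∏ d ∈ m.divisors, cyclotomic d K).Separable := by
    rw [prod_cyclotomic_eq_X_pow_sub_one (Nat.pos_of_ne_zero (by rintro rfl; simp at hm))]
    exact X_pow_sub_one_separable_iff.2 hm
  refine (hsep.of_dvd ?_).isCoprime
  rw [← Finset.prod_pair (f := fun d => cyclotomic d K) hab]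
  exact Finset.prod_dvd_prod_of_subset _ _ _ (Finset.insert_subset ha (by simpa using hb))

variable (R : Type*) [CommRing R] {p : ℕ} [Fact p.Prime] [CharP R p]

theorem X_pow_sub_one_pow_char_pow (k m : ℕ) :
    (X ^ m - 1 : R[X]) ^ p ^ k = X ^ (p ^ k * m) - 1 := by
  rw [sub_pow_char_pow, one_pow, ← pow_mul, mul_comm]

theorem subgroupPolynomial_prime_eq_prod_cyclotomic {m : ℕ} (hm : ¬p ∣ m) (k : ℕ) :
    subgroupPolynomial R p (p ^ k * m) = ∏ d ∈ m.divisors, cyclotomic (p ^ (k + 1) * d) R := by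
  have hp : 0 < p := (Fact.out : p.Prime).pos
  have hm0 : m ≠ 0 := by rintro rfl; simp at hm
  have hprod : ∏ d ∈ m.divisors, cyclotomic (p ^ (k + 1) * d) R =
      (X ^ m - 1) ^ (p ^ (k + 1) - p ^ k) := by
    rw [← prod_cyclotomic_eq_X_pow_sub_one hm0.bot_lt, ← Finset.prod_pow]
    refine Finset.prod_congr rfl fun d hd => ?_
    have hpd : ¬p ∣ d := fun h => hm (h.trans (Nat.dvd_of_mem_divisors hd))
    rw [cyclotomic_mul_prime_pow_eq R hpd k.succ_pos, Nat.succ_eq_add_one, Nat.add_sub_cancel]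
  have hs : p ^ k * m ≠ 0 := by positivity
  apply (monic_X_pow_sub_one hs).isRegular.right
  simp only [subgroupPolynomial_mul_X_pow_sub_one]
  rw [hprod, ← X_pow_sub_one_pow_char_pow, ← pow_add,
    Nat.sub_add_cancel (Nat.pow_le_pow_right hp k.le_succ), X_pow_sub_one_pow_char_pow, ← mul_assoc,
    ← pow_succ']

theorem subgroupPolynomial_prime_dvd_of_cyclotomic_dvd {K : Type*} [Field K] [CharP K p] {P : K[X]}
    {m k : ℕ} (hm : ¬p ∣ m) (h : ∀ d, d ∣ m → cyclotomic (p ^ (k + 1) * d) K ∣ P) :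
    subgroupPolynomial K p (p ^ k * m) ∣ P := by
  rw [subgroupPolynomial_prime_eq_prod_cyclotomic K hm]
  refine Finset.prod_dvd_of_coprime ?_ fun d hd => h d (Nat.dvd_of_mem_divisors hd)
  intro a ha b hb hab
  have hndvd {d : ℕ} (hd : d ∈ m.divisors) : ¬p ∣ d := fun h =>
    hm (h.trans (Nat.dvd_of_mem_divisors hd))
  rw [Function.onFun, cyclotomic_mul_prime_pow_eq K (hndvd ha) k.succ_pos,
    cyclotomic_mul_prime_pow_eq K (hndvd hb) k.succ_pos]
  exact (pairwise_isCoprime_cyclotomic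
    (by rwa [Ne, CharP.cast_eq_zero_iff K p]) ha hb hab).pow

end PrimeCharacteristic

section CharacterValues

variable {L : Type*} [Field L] [CharZero L] {ζ : L}

theorem mem_adjoin_int_of_isIntegral_s6 {n : ℕ} [NeZero n] (hζ : IsPrimitiveRoot ζ n) {y : L}
    (hy : IsIntegral ℤ y) (hyζ : y ∈ IntermediateField.adjoin ℚ {ζ}) :
    y ∈ Algebra.adjoin ℤ {ζ} := by
  let F := IntermediateField.adjoin ℚ {ζ}
  have : IsCyclotomicExtension {n} ℚ F := by
    change IsCyclotomicExtension {n} ℚ F.toSubalgebra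
    rw [IntermediateField.adjoin_simple_toSubalgebra_of_isAlgebraic
      (hζ.isIntegral (NeZero.pos n)).tower_top.isAlgebraic]
    exact hζ.adjoin_isCyclotomicExtension ℚ
  let ζ' : F := ⟨ζ, IntermediateField.mem_adjoin_simple_self ℚ ζ⟩
  have hζ' : IsPrimitiveRoot ζ' n := IsPrimitiveRoot.coe_submonoidClass_iff.1 hζ
  have hy' : IsIntegral ℤ (⟨y, hyζ⟩ : F) :=
    (isIntegral_algebraMap_iff (algebraMap F L).injective).1 hy
  have := IsCyclotomicExtension.Rat.isIntegralClosure_adjoin_singleton hζ'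
  obtain ⟨w, hw⟩ := (IsIntegralClosure.isIntegral_iff (A := Algebra.adjoin ℤ {ζ'})).1 hy'
  have hmem : (⟨y, hyζ⟩ : F) ∈ Algebra.adjoin ℤ {ζ'} := hw ▸ w.2
  have hmap := (F.val.restrictScalars ℤ).map_adjoin_singleton ζ'
  exact hmap ▸ Subalgebra.mem_map.2 ⟨_, hmem, rfl⟩

theorem cyclotomic_dvd_map_of_aeval_eq_mul_s6 {n p : ℕ} [NeZero n] (hζ : IsPrimitiveRoot ζ n)
    (hp : p ≠ 0) {P : ℤ[X]} {y : L} (hy : IsIntegral ℤ y) (h : aeval ζ P = p * y) :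
    cyclotomic n (ZMod p) ∣ P.map (Int.castRingHom (ZMod p)) := by
  have hn := NeZero.pos n
  have hyζ : y ∈ IntermediateField.adjoin ℚ {ζ} := by
    rw [← inv_mul_cancel_left₀ (Nat.cast_ne_zero.2 hp : (p : L) ≠ 0) y, ← h,
      ← aeval_map_algebraMap ℚ]
    exact mul_mem (inv_mem (natCast_mem _ p))
      (IntermediateField.algebra_adjoin_le_adjoin _ _ (aeval_mem_adjoin_singleton ℚ ζ))
  have hyadj := mem_adjoin_int_of_isIntegral_s6 hζ hy hyζ
  rw [Algebra.adjoin_singleton_eq_range_aeval] at hyadj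
  obtain ⟨Q, rfl⟩ := hyadj
  have hdvd : cyclotomic n ℤ ∣ P - C (p : ℤ) * Q := by
    rw [cyclotomic_eq_minpoly hζ hn]
    exact minpoly.isIntegrallyClosed_dvd (hζ.isIntegral hn) (by simp [h])
  simpa using Polynomial.map_dvd (Int.castRingHom (ZMod p)) hdvd

theorem subgroupPolynomial_prime_dvd_map {p s : ℕ} (hp : p.Prime) (hs : s ≠ 0)
    (hζ : IsPrimitiveRoot ζ (p * s)) {P : ℤ[X]}
    (h : ∀ z, 0 < z → z < p * s → ∃ y, IsIntegral ℤ y ∧ aeval (ζ ^ z) P = p * y) :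
    subgroupPolynomial (ZMod p) p s ∣ P.map (Int.castRingHom (ZMod p)) := by
  have : Fact p.Prime := ⟨hp⟩
  obtain ⟨k, m, hpm, rfl⟩ := Nat.exists_eq_pow_mul_and_not_dvd hs p hp.ne_one
  refine subgroupPolynomial_prime_dvd_of_cyclotomic_dvd hpm ?_
  rintro d ⟨z, rfl⟩
  have hdz : d * z ≠ 0 := right_ne_zero_of_mul hs
  have : NeZero (p ^ (k + 1) * d) :=
    ⟨mul_ne_zero (pow_ne_zero _ hp.ne_zero) (left_ne_zero_of_mul hdz)⟩
  have hz : 0 < z := (right_ne_zero_of_mul hdz).bot_lt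
  have hn : p * (p ^ k * (d * z)) = z * (p ^ (k + 1) * d) := by ring
  have hlt : z < p * (p ^ k * (d * z)) := by
    rw [hn]
    exact lt_mul_of_one_lt_right hz ((Nat.one_lt_pow k.succ_ne_zero hp.one_lt).trans_le
      (Nat.le_mul_of_pos_right _ (left_ne_zero_of_mul hdz).bot_lt))
  obtain ⟨y, hy, hPy⟩ := h z hz hlt
  exact cyclotomic_dvd_map_of_aeval_eq_mul_s6 (hζ.pow (by lia) hn) hp.ne_zero hy hPy

theorem subgroupPolynomial_dvd_of_forall_aeval {c s : ℕ} {P : ℤ[X]} (hcs : c * s ≠ 0)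
    (hζ : IsPrimitiveRoot ζ (c * s)) (hP : P.degree < (c * s : ℕ))
    (hcoeff : ∀ p, p.Prime → p ∣ c → ∀ i < c * s, ∀ j < c * s, P.coeff i < P.coeff j + p)
    (h : ∀ z, 0 < z → z < c * s → ∃ y, IsIntegral ℤ y ∧ aeval (ζ ^ z) P = c * y) :
    subgroupPolynomial ℤ c s ∣ P := by
  induction c using induction_on_primes generalizing ζ P with
  | zero => simp at hcs
  | one => simp
  | prime_mul p c hp ih =>
    rw [mul_assoc] at *
    have hcs' : c * s ≠ 0 := right_ne_zero_of_mul hcs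
    have hT : subgroupPolynomial ℤ p (c * s) ∣ P := by
      refine subgroupPolynomial_dvd_of_dvd_map hcs hP (hcoeff p hp (dvd_mul_right p c)) ?_
      refine subgroupPolynomial_prime_dvd_map hp hcs' hζ fun z hz hzn => ?_
      obtain ⟨y, hy, hPy⟩ := h z hz hzn
      exact ⟨c * y, (isIntegral_natCast c).mul hy, by rw [hPy, Nat.cast_mul, mul_assoc]⟩
    obtain ⟨Q, rfl⟩ := exists_eq_mul_left_of_dvd hT
    have hQ : Q.degree < (c * s : ℕ) := (degree_mul_subgroupPolynomial_lt_iff hcs).1 hP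
    have hQcoeff {i : ℕ} (hi : i < c * s) :
        (Q * subgroupPolynomial ℤ p (c * s)).coeff i = Q.coeff i :=
      coeff_mul_subgroupPolynomial_of_lt hp.ne_zero hQ hi
    have hle : c * s ≤ p * (c * s) := Nat.le_mul_of_pos_left _ hp.pos
    rw [← subgroupPolynomial_mul_subgroupPolynomial p (right_ne_zero_of_mul hcs'), mul_comm]
    refine mul_dvd_mul_right (ih hcs' (hζ.pow hcs.bot_lt rfl) hQ ?_ ?_) _
    · intro q hq hqc i hi j hj
      simpa only [hQcoeff hi, hQcoeff hj] using
        hcoeff q hq (hqc.mul_left p) i (hi.trans_le hle) j (hj.trans_le hle)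
    · intro z hz hzn
      obtain ⟨y, hy, hPy⟩ := h (p * z) (Nat.mul_pos hp.pos hz)
        (Nat.mul_lt_mul_of_pos_left hzn hp.pos)
      have hpow : (ζ ^ (p * z)) ^ (c * s) = 1 := by
        rw [← pow_mul, mul_right_comm, pow_mul, hζ.pow_eq_one, one_pow]
      refine ⟨y, hy, mul_left_cancel₀ (Nat.cast_ne_zero.2 hp.ne_zero : (p : L) ≠ 0) ?_⟩
      rw [← pow_mul, ← mul_assoc, ← Nat.cast_mul, ← hPy, map_mul,
        aeval_subgroupPolynomial_of_pow_eq_one hpow, mul_comm]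

end CharacterValues

section MultisetPolynomial

/-- The generating polynomial `∑_{a ∈ M} X ^ a` of a multiset of natural numbers; for a multiset of
exponents it represents the corresponding element `∑ Δ_M(a) x ^ a` of the group ring. -/
noncomputable def multisetPolynomial (R : Type*) [Semiring R] (M : Multiset ℕ) : R[X] :=
  (M.map (X ^ ·)).sum

variable {R : Type*} [Semiring R]

@[simp]
theorem coeff_multisetPolynomial (M : Multiset ℕ) (i : ℕ) :
    (multisetPolynomial R M).coeff i = M.count i := by
  induction M using Multiset.induction with
  | empty => simp [multisetPolynomial]
  | cons a M ih =>
    rw [multisetPolynomial, Multiset.map_cons, Multiset.sum_cons, coeff_add, ← multisetPolynomial,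
      ih, coeff_X_pow, Multiset.count_cons, add_comm]
    push_cast
    rfl

theorem multisetPolynomial_injective [CharZero R] :
    Function.Injective (multisetPolynomial R) := fun M N h =>
  Multiset.ext.2 fun i => by simpa using congrArg (coeff · i) h

theorem aeval_multisetPolynomial {R A : Type*} [CommSemiring R] [Semiring A] [Algebra R A] (x : A)
    (M : Multiset ℕ) : aeval x (multisetPolynomial R M) = (M.map (x ^ ·)).sum := by
  simp [multisetPolynomial, map_multiset_sum, Multiset.map_map]

theorem multisetPolynomial_bind_coset (E : Multiset ℕ) (c s : ℕ) :
    multisetPolynomial R (E.bind fun a => (Multiset.range c).map fun j => a + j * s) =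
      multisetPolynomial R E * subgroupPolynomial R c s := by
  simp only [multisetPolynomial, subgroupPolynomial, Multiset.map_bind, Multiset.sum_bind,
    Multiset.map_map, Function.comp_def, pow_add, Multiset.sum_map_mul_left,
    Multiset.sum_map_mul_right]
  rfl

theorem degree_multisetPolynomial_lt {M : Multiset ℕ} {n : ℕ} (hM : ∀ a ∈ M, a < n) :
    (multisetPolynomial R M).degree < n := by
  refine (degree_lt_iff_coeff_zero _ _).2 fun i hi => ?_
  rw [coeff_multisetPolynomial, Multiset.count_eq_zero_of_notMem fun h => (hM i h).not_ge hi,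
    Nat.cast_zero]

theorem eq_bind_coset_of_subgroupPolynomial_dvd {R : Type*} [CommRing R] [CharZero R]
    {M : Multiset ℕ} {c s : ℕ} (hcs : c * s ≠ 0) (hM : ∀ a ∈ M, a < c * s)
    (h : subgroupPolynomial R c s ∣ multisetPolynomial R M) :
    M = (M.filter (· < s)).bind fun a => (Multiset.range c).map fun j => a + j * s := by
  obtain ⟨Q, hQ⟩ := exists_eq_mul_left_of_dvd h
  have hQdeg : Q.degree < s :=
    (degree_mul_subgroupPolynomial_lt_iff hcs).1 (hQ ▸ degree_multisetPolynomial_lt hM)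
  suffices Q = multisetPolynomial R (M.filter (· < s)) from
    multisetPolynomial_injective (R := R) (by rw [multisetPolynomial_bind_coset, ← this, hQ])
  ext i
  rw [coeff_multisetPolynomial, Multiset.count_filter]
  split_ifs with hi
  · rw [← coeff_multisetPolynomial (R := R), hQ,
      coeff_mul_subgroupPolynomial_of_lt (left_ne_zero_of_mul hcs) hQdeg hi]
  · rw [coeff_eq_zero_of_degree_lt (hQdeg.trans_le (by exact_mod_cast not_lt.1 hi)), Nat.cast_zero]

end MultisetPolynomial

theorem count_map_val {n : ℕ} [NeZero n] (U : Multiset (ZMod n)) {a : ℕ} (ha : a < n) :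
    (U.map ZMod.val).count a = U.count (a : ZMod n) := by
  conv_lhs => rw [← ZMod.val_cast_of_lt ha]
  exact Multiset.count_map_eq_count' _ _ (ZMod.val_injective n) _

theorem multiset_coset_structure_odd_general {L : Type*} [Field L] [CharZero L] {c n : ℕ}
    (hcn : c ∣ n) (hn : 0 < n) {ζ : L} (hζ : IsPrimitiveRoot ζ n) {U : Multiset (ZMod n)}
    (hU : ∀ p : ℕ, p.Prime → p ∣ c → ∀ a b : ZMod n, U.count a < U.count b + p)
    (hchar : ∀ z : ZMod n, z ≠ 0 → ∃ y : L, IsIntegral ℤ y ∧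
      (U.map fun i => ζ ^ (i.val * z.val)).sum = c * y) :
    ∃ E : Multiset ℕ, (∀ a ∈ E, a < n / c) ∧ (∀ a : ℕ, E.count a ≤ U.count (a : ZMod n)) ∧
      U = E.bind fun a => (Multiset.range c).map fun j => ((a + j * (n / c) : ℕ) : ZMod n) := by
  have : NeZero n := ⟨hn.ne'⟩
  have hcs : c * (n / c) = n := Nat.mul_div_cancel' hcn
  have hM : ∀ a ∈ U.map ZMod.val, a < n := by
    simpa using fun b (_ : b ∈ U) => ZMod.val_lt b
  have hdvd : subgroupPolynomial ℤ c (n / c) ∣ multisetPolynomial ℤ (U.map ZMod.val) := by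
    apply subgroupPolynomial_dvd_of_forall_aeval (ζ := ζ) <;> rw [hcs]
    · exact hn.ne'
    · exact hζ
    · exact degree_multisetPolynomial_lt hM
    · intro p hp hpc i hi j hj
      simpa only [coeff_multisetPolynomial, count_map_val U hi, count_map_val U hj] using
        mod_cast hU p hp hpc i j
    · intro z hz hzn
      have hz0 : (z : ZMod n) ≠ 0 := fun h =>
        hz.ne' (Nat.eq_zero_of_dvd_of_lt ((ZMod.natCast_eq_zero_iff z n).1 h) hzn)
      simpa [aeval_multisetPolynomial, Multiset.map_map, ZMod.val_cast_of_lt hzn, ← pow_mul,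
        mul_comm z] using hchar z hz0
  have hbind := eq_bind_coset_of_subgroupPolynomial_dvd (hcs.trans_ne hn.ne') (by rwa [hcs]) hdvd
  refine ⟨(U.map ZMod.val).filter (· < n / c), fun a ha => (Multiset.mem_filter.1 ha).2,
    fun a => ?_, ?_⟩
  · rcases lt_or_ge a n with ha | ha
    · rw [← count_map_val U ha]
      exact Multiset.count_le_of_le a (Multiset.filter_le _ _)
    · rw [Multiset.count_eq_zero_of_notMem fun h => (hM a (Multiset.mem_of_mem_filter h)).not_ge ha]
      exact Nat.zero_le _
  · simpa [Multiset.map_bind, Multiset.map_map] using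
      congrArg (Multiset.map (Nat.cast : ℕ → ZMod n)) hbind

/-- Let `c` be an odd positive divisor of `n`. If `U` is a multisubset of
`ZMod n` with multiplicities at most `2` and `χ(Ū) ≡ 0 (mod c)` (in `ℤ[ζ_n]`) for all
nonprincipal characters `χ`, then `U = x^E·⟨x^{n/c}⟩` for some multisubset `E` of
`{0,…,n/c − 1}` with multiplicities at most `2`. -/
theorem multiset_coset_structure_odd (c n : ℕ) (hcodd : Odd c) (hc : 0 < c) (hdvd : c ∣ n)
    (hn : 0 < n) (ζ : ℂ) (hζ : IsPrimitiveRoot ζ n)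
    (U : Multiset (ZMod n)) (hU2 : ∀ a : ZMod n, U.count a ≤ 2)
    (hchar : ∀ z : ZMod n, z ≠ 0 →
      ∃ y ∈ Algebra.adjoin ℤ ({ζ} : Set ℂ),
        (U.map (fun i => ζ ^ (i.val * z.val))).sum = (c : ℂ) * y) :
    ∃ E : Multiset ℕ, (∀ a ∈ E, a < n / c) ∧ (∀ a : ℕ, E.count a ≤ 2) ∧
      U = E.bind (fun a => (Multiset.range c).map
        (fun j => ((a + j * (n / c) : ℕ) : ZMod n))) := by
  have hcount (p : ℕ) (hp : p.Prime) (hpc : p ∣ c) (a b : ZMod n) :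
      U.count a < U.count b + p := by
    have hp2 : p ≠ 2 := fun h => absurd (hcodd.of_dvd_nat hpc) (by rw [h]; decide)
    have := hp.two_le
    have := hU2 a
    lia
  have hint (z : ZMod n) (hz : z ≠ 0) : ∃ y : ℂ, IsIntegral ℤ y ∧
      (U.map fun i => ζ ^ (i.val * z.val)).sum = c * y := by
    obtain ⟨y, hy, hsum⟩ := hchar z hz
    exact ⟨y, adjoin_le_integralClosure (hζ.isIntegral hn) hy, hsum⟩
  obtain ⟨E, hElt, hEcount, hUE⟩ := multiset_coset_structure_odd_general hdvd hn hζ hcount hint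
  exact ⟨E, hElt, fun a => (hEcount a).trans (hU2 a), hUE⟩
end
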